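/- For every integer k ≥ 3 there exists a k-way cutting scheme whose maximum separation density is at most 1.3438: there exist a probability space (Ω, 𝒜, μ) and a map c : Ω → (Δ_k → {1,…,k}) with c(ω)(e_i) = i for every ω and every i, such that for all x, y ∈ Δ_k the set {ω : c(ω)(x) ≠ c(ω)(y)} is measurable and μ{ω : c(ω)(x) ≠ c(ω)(y)} ≤ 1.3438·(1/2)·∑_{i=1}^k |x_i − y_i|. (Hence τ_k* ≤ 1.3438 for all k.) -/

import Mathlib

open MeasureTheory

def HasScheme (k : ℕ) (L : (Fin k → ℝ) → Fin k → ℝ)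
    (E : (Fin k → ℝ) → (Fin k → ℝ) → ℝ) : Prop :=
  ∃ (Ω : Type) (_ : MeasurableSpace Ω) (μ : Measure Ω) (_ : IsProbabilityMeasure μ)
      (c : Ω → (Fin k → ℝ) → Fin k),
      (∀ ω : Ω, ∀ i : Fin k, c ω (Pi.single i 1) = i) ∧
      (∀ x ∈ stdSimplex ℝ (Fin k), ∀ l, MeasurableSet {ω : Ω | c ω x = l}) ∧
      (∀ x ∈ stdSimplex ℝ (Fin k), ∀ l, L x l ≤ μ.real {ω : Ω | c ω x = l}) ∧
      (∀ x ∈ stdSimplex ℝ (Fin k), ∀ y ∈ stdSimplex ℝ (Fin k),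
        μ.real {ω : Ω | c ω x ≠ c ω y} ≤ E x y)

lemma meas_ne {Ω : Type} [MeasurableSpace Ω] {k : ℕ} (f g : Ω → Fin k)
    (hf : ∀ l, MeasurableSet {ω | f ω = l}) (hg : ∀ l, MeasurableSet {ω | g ω = l}) :
    MeasurableSet {ω | f ω ≠ g ω} := by
  have : {ω | f ω ≠ g ω} = (⋃ l, {ω | f ω = l} ∩ {ω | g ω = l})ᶜ := by
    ext ω; simp [eq_comm]
  rw [this]
  exact (MeasurableSet.iUnion fun l => (hf l).inter (hg l)).compl

lemma HasScheme.mono {k : ℕ} {L L' : (Fin k → ℝ) → Fin k → ℝ}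
    {E E' : (Fin k → ℝ) → (Fin k → ℝ) → ℝ} (h : HasScheme k L E)
    (hL : ∀ x ∈ stdSimplex ℝ (Fin k), ∀ l, L' x l ≤ L x l)
    (hE : ∀ x ∈ stdSimplex ℝ (Fin k), ∀ y ∈ stdSimplex ℝ (Fin k), E x y ≤ E' x y) :
    HasScheme k L' E' := by
  obtain ⟨Ω, m, μ, hμ, c, h1, h2, h3, h4⟩ := h
  exact ⟨Ω, m, μ, hμ, c, h1, h2, fun x hx l => (hL x hx l).trans (h3 x hx l),
    fun x hx y hy => (h4 x hx y hy).trans (hE x hx y hy)⟩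

lemma HasScheme.mix {k n : ℕ} {L : Fin n → (Fin k → ℝ) → Fin k → ℝ}
    {E : Fin n → (Fin k → ℝ) → (Fin k → ℝ) → ℝ} (h : ∀ i, HasScheme k (L i) (E i))
    (w : Fin n → ℝ) (hw : ∀ i, 0 ≤ w i) (hs : ∑ i, w i = 1) :
    HasScheme k (fun x l => ∑ i, w i * L i x l) (fun x y => ∑ i, w i * E i x y) := by
  choose Ω m μ hμ c h1 h2 h3 h4 using h
  let ν : Measure (Σ i, Ω i) := ∑ i, ENNReal.ofReal (w i) • (μ i).map (Sigma.mk i)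
  have hmk : ∀ i, Measurable (Sigma.mk i : Ω i → Σ i, Ω i) := fun i =>
    Measurable.of_le_map (iInf_le _ i)
  have hν : ∀ S : Set (Σ i, Ω i), MeasurableSet S →
      ν S = ∑ i, ENNReal.ofReal (w i) * μ i (Sigma.mk i ⁻¹' S) := by
    intro S hS
    simp only [ν, Measure.finsetSum_apply, Measure.smul_apply, smul_eq_mul]
    exact Finset.sum_congr rfl fun i _ => by rw [Measure.map_apply (hmk i) hS]
  have hνr : ∀ S : Set (Σ i, Ω i), MeasurableSet S →
      ν.real S = ∑ i, w i * (μ i).real (Sigma.mk i ⁻¹' S) := by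
    intro S hS
    rw [Measure.real, hν S hS, ENNReal.toReal_sum]
    · exact Finset.sum_congr rfl fun i _ => by
        rw [ENNReal.toReal_mul, ENNReal.toReal_ofReal (hw i), Measure.real]
    · intro i _
      exact ENNReal.mul_ne_top ENNReal.ofReal_ne_top (measure_ne_top _ _)
  have hprob : IsProbabilityMeasure ν := by
    constructor
    rw [hν _ MeasurableSet.univ]
    simp only [Set.preimage_univ, measure_univ, mul_one]
    rw [← ENNReal.ofReal_sum_of_nonneg (fun i _ => hw i), hs, ENNReal.ofReal_one]
  have hm : ∀ x ∈ stdSimplex ℝ (Fin k), ∀ l,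
      MeasurableSet {ω : Σ i, Ω i | c ω.1 ω.2 x = l} := by
    intro x hx l
    refine MeasurableSpace.measurableSet_iInf.2 fun i => ?_
    exact h2 i x hx l
  refine ⟨Σ i, Ω i, inferInstance, ν, hprob, fun ω x => c ω.1 ω.2 x, fun ω i => h1 _ _ _, hm,
    ?_, ?_⟩
  · intro x hx l
    rw [hνr _ (hm x hx l)]
    exact Finset.sum_le_sum fun i _ => mul_le_mul_of_nonneg_left (h3 i x hx l) (hw i)
  · intro x hx y hy
    rw [hνr _ (meas_ne _ _ (hm x hx) (hm y hy))]
    exact Finset.sum_le_sum fun i _ => mul_le_mul_of_nonneg_left (h4 i x hx y hy) (hw i)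

noncomputable def U01 : Measure ℝ := volume.restrict (Set.Ico 0 1)

instance : IsProbabilityMeasure U01 := ⟨by simp [U01]⟩

lemma U01_Ico {a b : ℝ} (ha : 0 ≤ a) (hab : a ≤ b) (hb : b ≤ 1) :
    U01.real (Set.Ico a b) = b - a := by
  rw [U01, measureReal_restrict_apply measurableSet_Ico,
    Set.inter_eq_left.2 (Set.Ico_subset_Ico ha hb), Real.volume_real_Ico_of_le hab]

lemma simplex_le_one {k : ℕ} {x : Fin k → ℝ} (hx : x ∈ stdSimplex ℝ (Fin k)) (l : Fin k) :
    x l ≤ 1 := by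
  rw [← hx.2]
  exact Finset.single_le_sum (fun i _ => hx.1 i) (Finset.mem_univ l)

open Classical in
lemma HasScheme.cap {k : ℕ} {L : (Fin k → ℝ) → Fin k → ℝ}
    {E : (Fin k → ℝ) → (Fin k → ℝ) → ℝ} (h : HasScheme k L E) (l : Fin k) :
    HasScheme k (fun x m => (if m = l then x l else 0) + (1 - x l) * L x m)
      (fun x y => |x l - y l| * (1 - min (L x l) (L y l)) + (1 - max (x l) (y l)) * E x y) := by
  obtain ⟨Ω, m, μ, hμ, c, h1, h2, h3, h4⟩ := h
  have hm : ∀ x ∈ stdSimplex ℝ (Fin k), ∀ j,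
      MeasurableSet {ω : ℝ × Ω | (if ω.1 ∈ Set.Ico 0 (x l) then l else c ω.2 x) = j} := by
    intro x hx j
    have e : {ω : ℝ × Ω | (if ω.1 ∈ Set.Ico 0 (x l) then l else c ω.2 x) = j} =
        (Set.Ico 0 (x l)) ×ˢ {_ω | l = j} ∪ (Set.Ico 0 (x l))ᶜ ×ˢ {ω | c ω x = j} := by
      ext ω
      by_cases hω : ω.1 ∈ Set.Ico 0 (x l)
      · simp only [Set.mem_ofPred_eq, if_pos hω, Set.mem_union, Set.mem_prod, Set.mem_compl_iff, hω]
        simp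
      · simp only [Set.mem_ofPred_eq, if_neg hω, Set.mem_union, Set.mem_prod, Set.mem_compl_iff, hω]
        simp
    rw [e]
    exact (measurableSet_Ico.prod (MeasurableSet.const _)).union
      (measurableSet_Ico.compl.prod (h2 x hx j))
  refine ⟨ℝ × Ω, inferInstance, U01.prod μ, inferInstance,
    fun ω x => if ω.1 ∈ Set.Ico 0 (x l) then l else c ω.2 x, ?_, hm, ?_, ?_⟩
  · intro ω i
    by_cases hi : l = i
    · subst hi; simp [h1]
    · simp [hi, h1]
  · intro x hx j
    have hx0 := hx.1 l
    have hx1 := simplex_le_one hx l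
    have hU : U01.real (Set.Ico 0 (x l)) = x l := by rw [U01_Ico le_rfl hx0 hx1, sub_zero]
    have hV : U01.real (Set.Ico 0 (x l))ᶜ = 1 - x l := by
      rw [probReal_compl_eq_one_sub measurableSet_Ico, hU]
    have e : (Set.Ico 0 (x l)) ×ˢ {_ω : Ω | l = j} ∪ (Set.Ico 0 (x l))ᶜ ×ˢ {ω | c ω x = j} ⊆
      {ω : ℝ × Ω | (if ω.1 ∈ Set.Ico 0 (x l) then l else c ω.2 x) = j} := by
      rintro ω (⟨ha, hb⟩ | ⟨ha, hb⟩)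
      · simp only [Set.mem_ofPred_eq, if_pos ha]; exact hb
      · simp only [Set.mem_ofPred_eq, if_neg ha]; exact hb
    refine le_trans ?_ (measureReal_mono e)
    rw [measureReal_union _ (measurableSet_Ico.compl.prod (h2 x hx j))]
    · rw [measureReal_prod_prod, measureReal_prod_prod, hU, hV]
      refine add_le_add ?_ (mul_le_mul_of_nonneg_left (h3 x hx j) (by linarith))
      by_cases hj : l = j
      · subst hj; simp
      · rw [if_neg (Ne.symm hj)]; positivity
    · rw [Set.disjoint_left]
      rintro ω ⟨ha, _⟩ ⟨hb, _⟩
      exact hb ha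
  · have key : ∀ x ∈ stdSimplex ℝ (Fin k), ∀ y ∈ stdSimplex ℝ (Fin k), x l ≤ y l →
        ∀ r, μ.real {ω : Ω | c ω x ≠ c ω y} ≤ r →
        (U01.prod μ).real {ω : ℝ × Ω | (if ω.1 ∈ Set.Ico 0 (x l) then l else c ω.2 x) ≠
          (if ω.1 ∈ Set.Ico 0 (y l) then l else c ω.2 y)} ≤
          (y l - x l) * (1 - L x l) + (1 - y l) * r := by
      intro x hx y hy hxy r hr
      have hx0 := hx.1 l
      have hy1 := simplex_le_one hy l
      have e : {ω : ℝ × Ω | (if ω.1 ∈ Set.Ico 0 (x l) then l else c ω.2 x) ≠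
          (if ω.1 ∈ Set.Ico 0 (y l) then l else c ω.2 y)} ⊆
          (Set.Ico (x l) (y l)) ×ˢ {ω | c ω x = l}ᶜ ∪
          (Set.Ico 0 (y l))ᶜ ×ˢ {ω | c ω x ≠ c ω y} := by
        rintro ⟨t, ω⟩ hω
        simp only [Set.mem_ofPred_eq] at hω
        by_cases ha : t ∈ Set.Ico 0 (x l)
        · have hb : t ∈ Set.Ico 0 (y l) := ⟨ha.1, ha.2.trans_le hxy⟩
          rw [if_pos ha, if_pos hb] at hω
          exact absurd rfl hω
        · by_cases hb : t ∈ Set.Ico 0 (y l)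
          · rw [if_neg ha, if_pos hb] at hω
            left
            refine ⟨⟨?_, hb.2⟩, hω⟩
            by_contra hc
            exact ha ⟨hb.1, not_le.1 hc⟩
          · rw [if_neg ha, if_neg hb] at hω
            exact Or.inr ⟨hb, hω⟩
      refine (measureReal_mono e).trans ((measureReal_union_le _ _).trans ?_)
      rw [measureReal_prod_prod, measureReal_prod_prod, U01_Ico hx0 hxy hy1,
        probReal_compl_eq_one_sub measurableSet_Ico, U01_Ico le_rfl (hx0.trans hxy) hy1,
        probReal_compl_eq_one_sub (h2 x hx l), sub_zero]
      have := h3 x hx l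
      gcongr <;> linarith
    intro x hx y hy
    rcases le_total (x l) (y l) with hxy | hxy
    · refine (key x hx y hy hxy _ (h4 x hx y hy)).trans ?_
      beta_reduce
      rw [max_eq_right hxy, abs_sub_comm, abs_of_nonneg (sub_nonneg.2 hxy)]
      have := min_le_left (L x l) (L y l)
      have := sub_nonneg.2 hxy
      gcongr
    · have hr : μ.real {ω : Ω | c ω y ≠ c ω x} ≤ E x y := by
        simpa only [ne_comm] using h4 x hx y hy
      have hk := key y hy x hx hxy _ hr
      have e : {ω : ℝ × Ω | (if ω.1 ∈ Set.Ico 0 (x l) then l else c ω.2 x) ≠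
          (if ω.1 ∈ Set.Ico 0 (y l) then l else c ω.2 y)} =
          {ω : ℝ × Ω | (if ω.1 ∈ Set.Ico 0 (y l) then l else c ω.2 y) ≠
          (if ω.1 ∈ Set.Ico 0 (x l) then l else c ω.2 x)} := by
        ext ω; exact ne_comm
      beta_reduce
      rw [e]
      refine hk.trans ?_
      rw [max_eq_left hxy, abs_of_nonneg (sub_nonneg.2 hxy)]
      have := min_le_right (L x l) (L y l)
      have := sub_nonneg.2 hxy
      gcongr

open Classical in
lemma base_scheme {k : ℕ} (hk : 3 ≤ k) :
    HasScheme k (fun _ _ => 0) (fun x y => ∑ l, |x l ^ 2 - y l ^ 2|) := by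
  let f : Set (Fin k) → Fin k := fun S => if h : S.Nonempty then h.some else ⟨0, by omega⟩
  have hf : ∀ i, f {i} = i := by
    intro i
    have h : ({i} : Set (Fin k)).Nonempty := Set.singleton_nonempty i
    have h2 := h.some_mem
    simp only [f, dif_pos h]
    exact h2
  refine ⟨ℝ, inferInstance, U01, inferInstance,
    fun t x => f {l | Int.fract t < x l ^ 2}, ?_, ?_, ?_, ?_⟩
  · intro t i
    have : {l | Int.fract t < (Pi.single i 1 : Fin k → ℝ) l ^ 2} = {i} := by
      ext l
      by_cases h : l = i
      · subst h; simp [Int.fract_lt_one]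
      · simp [h, Int.fract_nonneg]
    beta_reduce
    rw [this, hf]
  · intro x hx l
    have hm : Measurable (fun t : ℝ => {l | Int.fract t < x l ^ 2}) := by
      rw [measurable_set_iff]
      intro a
      exact measurableSet_setOfPred.1 (measurableSet_lt measurable_fract measurable_const)
    exact hm (Set.toFinite {S : Set (Fin k) | f S = l}).measurableSet
  · intro x hx l
    exact measureReal_nonneg
  · intro x hx y hy
    have e : {t : ℝ | f {l | Int.fract t < x l ^ 2} ≠ f {l | Int.fract t < y l ^ 2}} ⊆
        (Set.Ico 0 1)ᶜ ∪ ⋃ l, Set.Ico (min (x l ^ 2) (y l ^ 2)) (max (x l ^ 2) (y l ^ 2)) := by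
      intro t ht
      by_contra hc
      simp only [Set.mem_union, Set.mem_compl_iff, Set.mem_iUnion, not_or, not_not,
        not_exists] at hc
      obtain ⟨h01, hc⟩ := hc
      apply ht
      congr 1
      ext l
      have h := hc l
      have hfr : Int.fract t = t := Int.fract_eq_self.2 h01
      simp only [Set.mem_ofPred_eq, hfr]
      simp only [Set.mem_Ico, min_le_iff, lt_max_iff, not_and, not_or, not_lt] at h
      constructor
      · intro h1
        by_contra h2
        have := (h (Or.inr (not_lt.1 h2))).1
        linarith
      · intro h1
        by_contra h2
        have := (h (Or.inl (not_lt.1 h2))).2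
        linarith
    refine (measureReal_mono e).trans ((measureReal_union_le _ _).trans ?_)
    rw [probReal_compl_eq_one_sub measurableSet_Ico, U01_Ico le_rfl zero_le_one le_rfl]
    have h := measureReal_iUnion_fintype_le (μ := U01)
      (fun l => Set.Ico (min (x l ^ 2) (y l ^ 2)) (max (x l ^ 2) (y l ^ 2)))
    have h2 : ∀ l, U01.real (Set.Ico (min (x l ^ 2) (y l ^ 2)) (max (x l ^ 2) (y l ^ 2))) =
        |x l ^ 2 - y l ^ 2| := by
      intro l
      rw [U01_Ico (by positivity) min_le_max
        (max_le (pow_le_one₀ (hx.1 l) (simplex_le_one hx l))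
          (pow_le_one₀ (hy.1 l) (simplex_le_one hy l))), max_sub_min_eq_abs, abs_sub_comm]
    simp only [h2] at h
    linarith

noncomputable def hD {k : ℕ} (x y : Fin k → ℝ) : ℝ := (1 / 2) * ∑ i, |x i - y i|

noncomputable def hA {k : ℕ} (x y : Fin k → ℝ) : ℝ := ∑ i, |x i - y i| * (1 - min (x i) (y i))

lemma sum_max {k : ℕ} {x y : Fin k → ℝ} (hx : x ∈ stdSimplex ℝ (Fin k))
    (hy : y ∈ stdSimplex ℝ (Fin k)) : ∑ i, max (x i) (y i) = 1 + hD x y := by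
  have : ∀ i, max (x i) (y i) = (1 / 2) * (x i + y i + |x i - y i|) := by
    intro i
    have := max_add_min (x i) (y i)
    have := max_sub_min_eq_abs (x i) (y i)
    rw [abs_sub_comm] at this
    linarith
  simp only [this, ← Finset.mul_sum, Finset.sum_add_distrib, hx.2, hy.2, hD]
  ring

lemma hD_nonneg {k : ℕ} (x y : Fin k → ℝ) : 0 ≤ hD x y := by
  unfold hD; positivity

lemma abs_le_hD {k : ℕ} {x y : Fin k → ℝ} (hx : x ∈ stdSimplex ℝ (Fin k))
    (hy : y ∈ stdSimplex ℝ (Fin k)) (i : Fin k) : |x i - y i| ≤ hD x y := by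
  have h1 : ∑ j, (max (x j) (y j) - y j) = hD x y := by
    rw [Finset.sum_sub_distrib, sum_max hx hy, hy.2]; ring
  have h2 : ∑ j, (max (x j) (y j) - x j) = hD x y := by
    rw [Finset.sum_sub_distrib, sum_max hx hy, hx.2]; ring
  have h3 := Finset.single_le_sum (f := fun j => max (x j) (y j) - y j)
    (fun j _ => sub_nonneg.2 (le_max_right _ _)) (Finset.mem_univ i)
  have h4 := Finset.single_le_sum (f := fun j => max (x j) (y j) - x j)
    (fun j _ => sub_nonneg.2 (le_max_left _ _)) (Finset.mem_univ i)
  have := le_max_left (x i) (y i)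
  have := le_max_right (x i) (y i)
  rw [abs_le]
  constructor <;> linarith

lemma hD_le_one {k : ℕ} {x y : Fin k → ℝ} (hx : x ∈ stdSimplex ℝ (Fin k))
    (hy : y ∈ stdSimplex ℝ (Fin k)) : hD x y ≤ 1 := by
  have h : ∑ i, max (x i) (y i) ≤ ∑ i, (x i + y i) :=
    Finset.sum_le_sum fun i _ => max_le (by linarith [hy.1 i]) (by linarith [hx.1 i])
  rw [sum_max hx hy, Finset.sum_add_distrib, hx.2, hy.2] at h
  linarith

lemma sq_bound {k : ℕ} {x y : Fin k → ℝ} (hx : x ∈ stdSimplex ℝ (Fin k))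
    (hy : y ∈ stdSimplex ℝ (Fin k)) :
    ∑ i, |x i ^ 2 - y i ^ 2| = ∑ i, |x i - y i| * (x i + y i) := by
  refine Finset.sum_congr rfl fun i _ => ?_
  rw [sq_sub_sq, abs_mul, abs_of_nonneg (add_nonneg (hx.1 i) (hy.1 i)), mul_comm]

lemma hA_bound {k : ℕ} {x y : Fin k → ℝ} (hx : x ∈ stdSimplex ℝ (Fin k))
    (hy : y ∈ stdSimplex ℝ (Fin k)) :
    hA x y / (1 + hD x y) ≤ 2 * hD x y - (1 / 2) * ∑ i, |x i - y i| * (x i + y i) := by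
  have hD0 := hD_nonneg x y
  have h2 : ∑ i, |x i - y i| = 2 * hD x y := by unfold hD; ring
  have hA' : hA x y = 2 * hD x y - (1 / 2) * ∑ i, |x i - y i| * (x i + y i)
      + (1 / 2) * ∑ i, |x i - y i| * |x i - y i| := by
    rw [← h2, hA, Finset.mul_sum, Finset.mul_sum, ← Finset.sum_sub_distrib,
      ← Finset.sum_add_distrib]
    refine Finset.sum_congr rfl fun i _ => ?_
    have hmin : min (x i) (y i) = (1 / 2) * (x i + y i - |x i - y i|) := by
      have := max_add_min (x i) (y i)
      have := max_sub_min_eq_abs (x i) (y i)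
      rw [abs_sub_comm] at this
      linarith
    rw [hmin]; ring
  have h3 : ∑ i, |x i - y i| * |x i - y i| ≤ hD x y * (2 * hD x y) := by
    rw [← h2, Finset.mul_sum]
    exact Finset.sum_le_sum fun i _ =>
      mul_le_mul_of_nonneg_right (abs_le_hD hx hy i) (abs_nonneg _)
  have h4 : ∑ i, |x i - y i| * (x i + y i) ≤ hD x y * 2 := by
    have : ∑ i, (x i + y i) = 2 := by rw [Finset.sum_add_distrib, hx.2, hy.2]; norm_num
    rw [← this, Finset.mul_sum]
    exact Finset.sum_le_sum fun i _ =>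
      mul_le_mul_of_nonneg_right (abs_le_hD hx hy i) (add_nonneg (hx.1 i) (hy.1 i))
  rw [div_le_iff₀ (by linarith), hA']
  nlinarith

lemma kt_scheme {k : ℕ} (hk : 3 ≤ k) (n : ℕ) :
    HasScheme k (fun x l => (1 - (1 - 1 / (k : ℝ)) ^ n) * x l)
      (fun x y => hA x y / (1 + hD x y) + (4 + 2 * n) * (1 - 1 / (k : ℝ)) ^ n * hD x y) := by
  have hk3 : (3 : ℝ) ≤ k := by exact_mod_cast hk
  have hp : 1 / (k : ℝ) ≤ 1 / 3 := one_div_le_one_div_of_le (by norm_num) hk3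
  have hp0 : 0 < 1 / (k : ℝ) := by positivity
  have hkp : (k : ℝ) * (1 / (k : ℝ)) = 1 := by field_simp
  set p := 1 / (k : ℝ) with hpdef
  induction n with
  | zero =>
    refine (base_scheme hk).mono ?_ ?_
    · intro x hx l; simp
    · intro x hx y hy
      have hD0 := hD_nonneg x y
      have h2 : ∑ i, |x i - y i| = 2 * hD x y := by unfold hD; ring
      have h1 : ∑ i, |x i ^ 2 - y i ^ 2| ≤ 4 * hD x y := by
        rw [sq_bound hx hy, show 4 * hD x y = (2 * hD x y) * 2 by ring, ← h2, Finset.sum_mul]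
        exact Finset.sum_le_sum fun i _ => mul_le_mul_of_nonneg_left
          (by linarith [simplex_le_one hx i, simplex_le_one hy i]) (abs_nonneg _)
      have h3 : 0 ≤ hA x y / (1 + hD x y) := by
        refine div_nonneg (Finset.sum_nonneg fun i _ => mul_nonneg (abs_nonneg _) ?_)
          (by linarith)
        linarith [simplex_le_one hx i, min_le_left (x i) (y i)]
      simp
      linarith
  | succ n ih =>
    have hq0 : 0 ≤ (1 - p) ^ n := pow_nonneg (by linarith) n
    have hq1 : (1 - p) ^ n ≤ 1 := pow_le_one₀ (by linarith) (by linarith)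
    set Q := (1 - p) ^ n with hQ
    refine (HasScheme.mix (fun l : Fin k => ih.cap l) (fun _ => p) (fun _ => hp0.le)
      (by simp [hkp])).mono ?_ ?_
    · intro x hx m
      have hsx := hx.2
      have : ∑ i, (1 - x i) = k - 1 := by simp [Finset.sum_sub_distrib, hsx]
      rw [← Finset.mul_sum, Finset.sum_add_distrib, ← Finset.sum_mul, this]
      simp only [Finset.sum_ite_eq, Finset.mem_univ, if_true]
      apply le_of_eq
      rw [pow_succ, ← hQ]
      linear_combination (-(1 - Q) * x m) * hkp
    · intro x hx y hy
      have hD0 := hD_nonneg x y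
      have hD1 := hD_le_one hx hy
      have h2 : ∑ i, |x i - y i| = 2 * hD x y := by unfold hD; ring
      have hm : ∑ i, (1 - max (x i) (y i)) = k - (1 + hD x y) := by
        simp [Finset.sum_sub_distrib, sum_max hx hy]
      rw [← Finset.mul_sum, Finset.sum_add_distrib, ← Finset.sum_mul, hm]
      have h5 : ∑ i, |x i - y i| * (1 - min ((1 - Q) * x i) ((1 - Q) * y i)) ≤
          hA x y + Q * (2 * hD x y) := by
        rw [hA, ← h2, Finset.mul_sum, ← Finset.sum_add_distrib]
        refine Finset.sum_le_sum fun i _ => ?_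
        rw [← mul_min_of_nonneg _ _ (by linarith : 0 ≤ 1 - Q)]
        have : min (x i) (y i) ≤ 1 := (min_le_left _ _).trans (simplex_le_one hx i)
        nlinarith [abs_nonneg (x i - y i), mul_nonneg (abs_nonneg (x i - y i))
          (mul_nonneg hq0 (sub_nonneg.2 this))]
      set B := hA x y / (1 + hD x y) with hB
      have hBA : hA x y = B * (1 + hD x y) := by rw [hB]; field_simp
      set D := hD x y
      refine (mul_le_mul_of_nonneg_left (add_le_add_left h5 _) hp0.le).trans ?_
      rw [hBA, pow_succ, ← hQ]
      push_cast
      have hn : (0 : ℝ) ≤ n := Nat.cast_nonneg n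
      have e1 : p * (B * (1 + D) + Q * (2 * D) + (k - (1 + D)) * (B + (4 + 2 * n) * Q * D))
          = B + Q * D * (2 * p + (1 - p * (1 + D)) * (4 + 2 * n)) := by
        linear_combination (B + (4 + 2 * n) * Q * D) * hkp
      rw [e1]
      have e2 : 2 * p + (1 - p * (1 + D)) * (4 + 2 * n) ≤ (4 + 2 * (n + 1)) * (1 - p) := by
        nlinarith [mul_nonneg (mul_nonneg hp0.le hD0) (by linarith : (0 : ℝ) ≤ 4 + 2 * n)]
      have := mul_le_mul_of_nonneg_left e2 (mul_nonneg hq0 hD0)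
      linarith

/-- For every `k ≥ 3` there is a `k`-way cutting scheme whose maximum
separation density is at most `1.3438`, hence `τ_k* ≤ 1.3438`. -/
theorem exists_k_way_cutting_scheme_density_le (k : ℕ) (hk : 3 ≤ k) :
    ∃ (Ω : Type) (_ : MeasurableSpace Ω) (μ : Measure Ω) (_ : IsProbabilityMeasure μ)
      (c : Ω → (Fin k → ℝ) → Fin k),
      (∀ ω : Ω, ∀ i : Fin k, c ω (Pi.single i 1) = i) ∧
      (∀ x ∈ stdSimplex ℝ (Fin k), ∀ y ∈ stdSimplex ℝ (Fin k),
        MeasurableSet {ω : Ω | c ω x ≠ c ω y} ∧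
        (μ {ω : Ω | c ω x ≠ c ω y}).toReal ≤ 1.3438 * ((1 / 2) * ∑ i, |x i - y i|)) := by
  have hk3 : (3 : ℝ) ≤ k := by exact_mod_cast hk
  have hp : 1 / (k : ℝ) ≤ 1 / 3 := one_div_le_one_div_of_le (by norm_num) hk3
  have hp0 : 0 < 1 / (k : ℝ) := by positivity
  obtain ⟨n, hn⟩ : ∃ n : ℕ, (4 + 2 * n) * (1 - 1 / (k : ℝ)) ^ n < 0.01 := by
    have t1 := tendsto_pow_atTop_nhds_zero_of_lt_one (r := 1 - 1 / (k : ℝ)) (by linarith)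
      (by linarith)
    have t2 := tendsto_self_mul_const_pow_of_lt_one (r := 1 - 1 / (k : ℝ)) (by linarith)
      (by linarith)
    have t := (t1.const_mul 4).add (t2.const_mul 2)
    rw [mul_zero, mul_zero, add_zero] at t
    obtain ⟨n, hn⟩ := (t.eventually (gt_mem_nhds (by norm_num : (0 : ℝ) < 0.01))).exists
    exact ⟨n, by linarith⟩
  have h := HasScheme.mix (k := k) (n := 2)
    (L := ![fun x l => (1 - (1 - 1 / (k : ℝ)) ^ n) * x l, fun _ _ => 0])
    (E := ![fun x y => hA x y / (1 + hD x y) + (4 + 2 * n) * (1 - 1 / (k : ℝ)) ^ n * hD x y,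
      fun x y => ∑ l, |x l ^ 2 - y l ^ 2|])
    (by
      intro i
      fin_cases i
      · exact kt_scheme hk n
      · exact base_scheme hk) ![2 / 3, 1 / 3]
      (by intro i; fin_cases i <;> norm_num) (by simp; norm_num)
  obtain ⟨Ω, m, μ, hμ, c, h1, h2, h3, h4⟩ := h
  refine ⟨Ω, m, μ, hμ, c, h1, fun x hx y hy => ⟨meas_ne _ _ (h2 x hx) (h2 y hy), ?_⟩⟩
  refine (h4 x hx y hy).trans ?_
  change _ ≤ 1.3438 * hD x y
  have hD0 := hD_nonneg x y
  have hb := hA_bound hx hy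
  simp only [Fin.sum_univ_two, Matrix.cons_val_zero, Matrix.cons_val_one]
  rw [sq_bound hx hy]
  have := mul_le_mul_of_nonneg_right hn.le hD0
  linarith
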